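/- Let k be a positive integer, let α ∈ (0,1], let I ⊆ ℝ be a bounded open interval, and let f : I → ℝ be continuous. Assume there exists g ∈ C^{k,α}(Ī, ℝ) such that |f(t)|^{k+α} = |g(t)| for all t ∈ I. Let p be defined by 1/p + 1/(k+α) = 1. Then f is absolutely continuous on I, its almost-everywhere derivative f' belongs to the weak Lebesgue space L^p_w(I), and ‖f'‖_{p,w,I} ≤ C(k) · max{ (Höld_{α,I}(g^{(k)}))^{1/(k+α)} |I|^{1/p}, ‖g'‖_{L^∞(I)}^{1/(k+α)} }, where C(k) is a constant depending only on k. -/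

import Mathlib

open Set MeasureTheory Real

noncomputable section

/-- `f` is absolutely continuous on the set `S` : for every `ε > 0` there is `δ > 0` such
that for any finitely many non-overlapping intervals `[u i, v i] ⊆ S` of total length `< δ`
the sum `∑ ‖f (v i) - f (u i)‖` is `< ε`. -/
def AbsContOn {E : Type*} [NormedAddCommGroup E] (f : ℝ → E) (S : Set ℝ) : Prop :=
  ∀ ε : ℝ, 0 < ε → ∃ δ : ℝ, 0 < δ ∧
    ∀ (N : ℕ) (u v : Fin N → ℝ),
      (∀ i, u i ≤ v i ∧ Set.Icc (u i) (v i) ⊆ S) →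
      (∀ i j, i ≠ j → Disjoint (Set.Ioo (u i) (v i)) (Set.Ioo (u j) (v j))) →
      (∑ i, (v i - u i)) < δ →
      (∑ i, ‖f (v i) - f (u i)‖) < ε

/-- `d (i+1)` is the derivative of `d i` on `S` for all `i < k`; thus `d i` is the `i`-th
derivative of `d 0` on `S` for `i ≤ k`. -/
def DerivChain {E : Type*} [NormedAddCommGroup E] [NormedSpace ℝ E]
    (d : ℕ → ℝ → E) (k : ℕ) (S : Set ℝ) : Prop :=
  ∀ i < k, ∀ x ∈ S, HasDerivWithinAt (d i) (d (i + 1) x) S x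

/-- Hölder constant of exponent `a` of `g` on `S`. -/
def HolderConst {E : Type*} [NormedAddCommGroup E] (a : ℝ) (S : Set ℝ) (g : ℝ → E) : ℝ :=
  sSup {r : ℝ | ∃ x ∈ S, ∃ y ∈ S, x ≠ y ∧ r = ‖g x - g y‖ / |x - y| ^ a}

/-- Membership in `C^{k,1}(S)`, encoded via the chain of derivatives `d`:
`d 0` is `k` times differentiable with `i`-th derivative `d i`, and the top
derivative `d k` is Lipschitz. -/
def MemCk1 {E : Type*} [NormedAddCommGroup E] [NormedSpace ℝ E]
    (d : ℕ → ℝ → E) (k : ℕ) (S : Set ℝ) : Prop :=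
  DerivChain d k S ∧ ∃ L : ℝ, ∀ x ∈ S, ∀ y ∈ S, ‖d k x - d k y‖ ≤ L * |x - y|

/-- The `C^{k,1}`-norm: sup of all derivatives up to order `k` plus the Lipschitz
(Hölder-1) constant of the `k`-th derivative. -/
def CNorm {E : Type*} [NormedAddCommGroup E] (d : ℕ → ℝ → E) (k : ℕ) (S : Set ℝ) : ℝ :=
  sSup {r : ℝ | ∃ i ≤ k, ∃ x ∈ S, r = ‖d i x‖} + HolderConst 1 S (d k)

/-!
On a set where `|g|^{1/m}`, `m = k + α`, has slope greater than `r`, let `δ t` be the scale at which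
`|g'(t)| = r^m δ^{m - 1}`; there `|g(t)| ≤ |g'(t)| δ`. Only `r^m` larger than a multiple of the
Hölder constant `H` of `g^{(k)}` matters, since the bound is trivial for the others. If `g g'` had
no zero within a suitable multiple of `δ` of `t`, then `|g| ≤ |g(t)|` on one side of `t`, and
interpolating between this and the Hölder bound on `g^{(k)}` would bound `|g'(t)|` by something
smaller than itself. So there is a zero of `g g'` nearby. Among `2^k` disjoint such neighbourhoods
in an interval of length `L`, iterated mean value theorems give a zero of each of `g', …, g^{(k)}`,
whence `|g'| ≤ H L^{m - 1}` and all the radii are at most a multiple of `(H / r^m)^{1/(m - 1)} L`.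
The sum of radii of disjoint neighbourhoods is therefore controlled, and Vitali's covering lemma
turns this into the weak-type estimate.

Since `m > 1`, the weak `L^p` bound makes the slope integrable. Off its zeros `f` is differentiable
with `|f'|` equal to the slope, and skipping from the first to the last zero bounds `|f v - f u|` by
the integral of the slope over `[u, v]`. At almost every zero `f' = 0`, because zeros with `f' ≠ 0`
are isolated.
-/

section Chains

variable {E : Type*} [NormedAddCommGroup E] [NormedSpace ℝ E]

lemma norm_le_add_mul_abs_sub {g g' : ℝ → E} {S : Set ℝ} {B x y : ℝ} (hS : Convex ℝ S)
    (hg : ∀ z ∈ S, HasDerivWithinAt g (g' z) S z) (hB : ∀ z ∈ S, ‖g' z‖ ≤ B)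
    (hx : x ∈ S) (hy : y ∈ S) : ‖g y‖ ≤ ‖g x‖ + B * |y - x| := by
  have mean_value : ‖g y - g x‖ ≤ B * |y - x| :=
    hS.norm_image_sub_le_of_norm_hasDerivWithin_le hg hB hx hy
  linarith [norm_sub_norm_le (g y) (g x)]

lemma DerivChain.mono {d : ℕ → ℝ → E} {k : ℕ} {S T : Set ℝ} (hd : DerivChain d k T)
    (hST : S ⊆ T) : DerivChain d k S :=
  fun i hi x hx ↦ (hd i hi x (hST hx)).mono hST

lemma DerivChain.hasDerivAt {d : ℕ → ℝ → E} {k i : ℕ} {S : Set ℝ} {x : ℝ} (hd : DerivChain d k S)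
    (hS : IsOpen S) (hi : i < k) (hx : x ∈ S) : HasDerivAt (d i) (d (i + 1) x) x :=
  (hd i hi x hx).hasDerivAt (hS.mem_nhds hx)

lemma DerivChain.tail {d : ℕ → ℝ → E} {k : ℕ} {S : Set ℝ} (hd : DerivChain d (k + 1) S) :
    DerivChain (fun i ↦ d (i + 1)) k S :=
  fun i hi ↦ hd (i + 1) (Nat.succ_lt_succ hi)

/-- `d 0` is of class `C^{k,α}` on `S` with derivatives `d i`, `i ≤ k`, and `H` is an admissible
Hölder constant of exponent `α` for `d k`. -/
structure HolderChain (d : ℕ → ℝ → E) (k : ℕ) (α H : ℝ) (S : Set ℝ) : Prop where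
  derivChain : DerivChain d k S
  norm_sub_le : ∀ x ∈ S, ∀ y ∈ S, ‖d k x - d k y‖ ≤ H * |x - y| ^ α

namespace HolderChain

variable {d : ℕ → ℝ → E} {k : ℕ} {α H : ℝ} {S T : Set ℝ}

lemma mono (h : HolderChain d k α H T) (hST : S ⊆ T) : HolderChain d k α H S where
  derivChain := h.derivChain.mono hST
  norm_sub_le x hx y hy := h.norm_sub_le x (hST hx) y (hST hy)

lemma tail (h : HolderChain d (k + 1) α H S) : HolderChain (fun i ↦ d (i + 1)) k α H S where
  derivChain := h.derivChain.tail
  norm_sub_le := h.norm_sub_le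

lemma exists_norm_le (h : HolderChain d k α H S) (hα : 0 ≤ α) (hS : Convex ℝ S)
    (hSb : Bornology.IsBounded S) {i : ℕ} (hi : i ≤ k) : ∃ B, ∀ x ∈ S, ‖d i x‖ ≤ B := by
  obtain rfl | ⟨x₀, hx₀⟩ := S.eq_empty_or_nonempty
  · exact ⟨0, by simp⟩
  have abs_sub_le_diam (x) (hx : x ∈ S) : |x - x₀| ≤ Metric.diam S :=
    Metric.dist_le_diam_of_mem hSb hx hx₀
  induction k generalizing d i with
  | zero =>
    obtain rfl : i = 0 := Nat.le_zero.mp hi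
    refine ⟨‖d 0 x₀‖ + |H| * Metric.diam S ^ α, fun x hx ↦ ?_⟩
    have : ‖d 0 x - d 0 x₀‖ ≤ |H| * Metric.diam S ^ α :=
      (h.norm_sub_le x hx x₀ hx₀).trans <| by
        gcongr
        exacts [le_abs_self H, abs_sub_le_diam x hx]
    linarith [norm_sub_norm_le (d 0 x) (d 0 x₀)]
  | succ k ih =>
    cases i with
    | succ i => exact ih h.tail (Nat.le_of_succ_le_succ hi)
    | zero =>
      obtain ⟨B, hB⟩ := ih h.tail (Nat.zero_le k)
      refine ⟨‖d 0 x₀‖ + B * Metric.diam S, fun x hx ↦ ?_⟩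
      have hB0 : 0 ≤ B := (norm_nonneg _).trans (hB x₀ hx₀)
      calc ‖d 0 x‖ ≤ ‖d 0 x₀‖ + B * |x - x₀| :=
            norm_le_add_mul_abs_sub hS (h.derivChain 0 k.succ_pos) hB hx₀ hx
        _ ≤ ‖d 0 x₀‖ + B * Metric.diam S := by gcongr; exact abs_sub_le_diam x hx

end HolderChain

end Chains

section HolderConst

variable {E : Type*} [NormedAddCommGroup E] {g : ℝ → E} {S : Set ℝ} {α H : ℝ}

lemma holderConst_nonneg : 0 ≤ HolderConst α S g :=
  Real.sSup_nonneg fun _ ⟨_, _, _, _, _, hr⟩ ↦ hr ▸ by positivity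

lemma norm_sub_le_holderConst_mul (hg : ∀ x ∈ S, ∀ y ∈ S, ‖g x - g y‖ ≤ H * |x - y| ^ α)
    {x y : ℝ} (hx : x ∈ S) (hy : y ∈ S) :
    ‖g x - g y‖ ≤ HolderConst α S g * |x - y| ^ α := by
  obtain rfl | hxy := eq_or_ne x y
  · simpa using mul_nonneg holderConst_nonneg (Real.rpow_nonneg (abs_nonneg (x - x)) α)
  have rpow_pos {x y : ℝ} (hxy : x ≠ y) : 0 < |x - y| ^ α :=
    Real.rpow_pos_of_pos (abs_pos.mpr (sub_ne_zero.mpr hxy)) α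
  rw [← div_le_iff₀ (rpow_pos hxy)]
  refine le_csSup ⟨H, ?_⟩ ⟨x, hx, y, hy, hxy, rfl⟩
  rintro _ ⟨z, hz, w, hw, hzw, rfl⟩
  exact (div_le_iff₀ (rpow_pos hzw)).mpr (hg z hz w hw)

end HolderConst

section OrderedIntervals

/-- The intervals `[u i, v i]`, `i < n`, lie in `[c, c']`, are pairwise disjoint, are listed from
left to right, and are separated by gaps of length at least `η`. For `u = v` these are `n` points of
`[c, c']`. For `η = 0` the field `lt` still makes the intervals disjoint. -/
structure OrderedIntervals (n : ℕ) (η c c' : ℝ) (u v : ℕ → ℝ) : Prop where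
  left_le : ∀ i < n, c ≤ u i
  le : ∀ i < n, u i ≤ v i
  le_right : ∀ i < n, v i ≤ c'
  lt : ∀ i j, i < j → j < n → v i < u j
  add_le : ∀ i j, i < j → j < n → v i + η ≤ u j

namespace OrderedIntervals

variable {n : ℕ} {η c c' : ℝ} {u v x : ℕ → ℝ}

lemma mem_Icc (hx : OrderedIntervals n η c c' x x) {i : ℕ} (hi : i < n) : x i ∈ Icc c c' :=
  ⟨hx.left_le i hi, hx.le_right i hi⟩

lemma exists_points_of_pairs {P : ℝ → Prop} (h : OrderedIntervals (2 * n) η c c' u v)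
    (hP : ∀ i < n, ∃ y ∈ Icc (u (2 * i)) (v (2 * i + 1)), P y) :
    ∃ y : ℕ → ℝ, OrderedIntervals n η c c' y y ∧ ∀ i < n, P (y i) := by
  choose! y hy hPy using hP
  refine ⟨y, ⟨fun i hi ↦ ?_, fun _ _ ↦ le_rfl, fun i hi ↦ ?_, fun i j hij hj ↦ ?_,
    fun i j hij hj ↦ ?_⟩, hPy⟩
  · exact (h.left_le (2 * i) (by omega)).trans (hy i hi).1
  · exact (hy i hi).2.trans (h.le_right (2 * i + 1) (by omega))
  · linarith [(hy i (by omega)).2, (hy j hj).1, h.lt (2 * i + 1) (2 * j) (by omega) (by omega)]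
  · linarith [(hy i (by omega)).2, (hy j hj).1, h.add_le (2 * i + 1) (2 * j) (by omega) (by omega)]

end OrderedIntervals

section MeanValue

variable {g g' : ℝ → ℝ} {S : Set ℝ} {x y : ℝ}

lemma exists_hasDerivWithinAt_eq_slope (hg : ∀ z ∈ S, HasDerivWithinAt g (g' z) S z) (hxy : x < y)
    (hS : Icc x y ⊆ S) : ∃ z ∈ Icc x y, g' z = (g y - g x) / (y - x) := by
  obtain ⟨z, hz, hgz⟩ := exists_hasDerivAt_eq_slope g g' hxy
    (fun z hz ↦ ((hg z (hS hz)).mono hS).continuousWithinAt)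
    (fun z hz ↦ ((hg z (hS (Ioo_subset_Icc_self hz))).mono hS).hasDerivAt (Icc_mem_nhds hz.1 hz.2))
  exact ⟨z, Ioo_subset_Icc_self hz, hgz⟩

lemma exists_deriv_eq_zero_of_zeros (hg : ∀ z ∈ S, HasDerivWithinAt g (g' z) S z) (hxy : x < y)
    (hS : Icc x y ⊆ S) (hx : g x = 0 ∨ g' x = 0) (hy : g y = 0 ∨ g' y = 0) :
    ∃ z ∈ Icc x y, g' z = 0 := by
  rcases hx, hy with ⟨hx | hx, hy | hy⟩
  · simpa [hx, hy] using exists_hasDerivWithinAt_eq_slope hg hxy hS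
  · exact ⟨y, right_mem_Icc.mpr hxy.le, hy⟩
  all_goals exact ⟨x, left_mem_Icc.mpr hxy.le, hx⟩

end MeanValue

namespace OrderedIntervals

variable {n : ℕ} {η c c' A : ℝ} {u v x : ℕ → ℝ} {g g' : ℝ → ℝ}

lemma exists_abs_deriv_le (hx : OrderedIntervals (2 * n) η c c' x x)
    (hg : ∀ y ∈ Icc c c', HasDerivWithinAt g (g' y) (Icc c c') y) (hA : 0 ≤ A)
    (hgx : ∀ i < 2 * n, |g (x i)| ≤ A * η) :
    ∃ y : ℕ → ℝ, OrderedIntervals n η c c' y y ∧ ∀ i < n, |g' (y i)| ≤ 2 * A := by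
  refine hx.exists_points_of_pairs (P := fun y ↦ |g' y| ≤ 2 * A) fun i hi ↦ ?_
  have lt_next : x (2 * i) < x (2 * i + 1) := hx.lt _ _ (by omega) (by omega)
  obtain ⟨y, hy, hgy⟩ := exists_hasDerivWithinAt_eq_slope hg lt_next
    (Icc_subset_Icc (hx.left_le _ (by omega)) (hx.le_right _ (by omega)))
  have gap : η ≤ x (2 * i + 1) - x (2 * i) := by
    linarith [hx.add_le (2 * i) (2 * i + 1) (by omega) (by omega)]
  refine ⟨y, hy, ?_⟩
  rw [hgy, abs_div, abs_of_pos (sub_pos.mpr lt_next), div_le_iff₀ (sub_pos.mpr lt_next)]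
  calc |g (x (2 * i + 1)) - g (x (2 * i))|
      ≤ |g (x (2 * i + 1))| + |g (x (2 * i))| := abs_sub _ _
    _ ≤ 2 * A * η := by linarith [hgx (2 * i) (by omega), hgx (2 * i + 1) (by omega)]
    _ ≤ 2 * A * (x (2 * i + 1) - x (2 * i)) := by gcongr

lemma exists_deriv_eq_zero (h : OrderedIntervals (2 * n) η c c' u v)
    (hg : ∀ y ∈ Icc c c', HasDerivWithinAt g (g' y) (Icc c c') y)
    (hz : ∀ i < 2 * n, ∃ z ∈ Icc (u i) (v i), g z = 0 ∨ g' z = 0) :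
    ∃ y : ℕ → ℝ, OrderedIntervals n η c c' y y ∧ ∀ i < n, g' (y i) = 0 := by
  refine h.exists_points_of_pairs (P := fun y ↦ g' y = 0) fun i hi ↦ ?_
  obtain ⟨z, hz_mem, hgz⟩ := hz (2 * i) (by omega)
  obtain ⟨w, hw_mem, hgw⟩ := hz (2 * i + 1) (by omega)
  have hzw : z < w := by
    linarith [hz_mem.2, hw_mem.1, h.lt (2 * i) (2 * i + 1) (by omega) (by omega)]
  obtain ⟨y, hy, hgy⟩ := exists_deriv_eq_zero_of_zeros hg hzw
    (Icc_subset_Icc ((h.left_le (2 * i) (by omega)).trans hz_mem.1)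
      (hw_mem.2.trans (h.le_right (2 * i + 1) (by omega)))) hgz hgw
  exact ⟨y, Icc_subset_Icc hz_mem.1 hw_mem.2 hy, hgy⟩

end OrderedIntervals

end OrderedIntervals

section Interpolation

variable {e d : ℕ → ℝ → ℝ} {j : ℕ} {α H c c' η A M : ℝ} {x : ℕ → ℝ}

/-- The constant of the interpolation inequality for the first derivative of a function of class
`C^{j + 1, α}`. -/
def interpConst (j : ℕ) : ℝ := 2 * 3 ^ j * (2 ^ (j + 1)) ^ (j + 1)

lemma two_le_interpConst (j : ℕ) : 2 ≤ interpConst j := by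
  rw [interpConst, mul_assoc]
  refine le_mul_of_one_le_right zero_le_two (one_le_mul_of_one_le_of_one_le ?_ ?_)
  · exact one_le_pow₀ (by norm_num)
  · exact one_le_pow₀ (one_le_pow₀ one_le_two)

namespace HolderChain

lemma abs_le_of_small_at_points (h : HolderChain e j α H (Icc c c')) (hα : 0 ≤ α) (hH : 0 ≤ H)
    (hη : 0 ≤ η) (hηc : η ≤ c' - c) (hM : 0 ≤ M) (hx : OrderedIntervals (2 ^ j) η c c' x x)
    (hex : ∀ i < 2 ^ j, |e 0 (x i)| ≤ M * η ^ j) {y : ℝ} (hy : y ∈ Icc c c') :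
    |e 0 y| ≤ 3 ^ j * M * (c' - c) ^ j + H * (c' - c) ^ (j + α) := by
  have hL : 0 ≤ c' - c := hη.trans hηc
  have hx₀ : x 0 ∈ Icc c c' := hx.mem_Icc (by positivity)
  have abs_sub_le {y : ℝ} (hy : y ∈ Icc c c') : |y - x 0| ≤ c' - c := Real.dist_le_of_mem_Icc hy hx₀
  induction j generalizing e M x y with
  | zero =>
    have holder : |e 0 y - e 0 (x 0)| ≤ H * (c' - c) ^ α :=
      (h.norm_sub_le y hy _ hx₀).trans (by gcongr; exact abs_sub_le hy)
    have := hex 0 (by simp)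
    simp only [pow_zero, mul_one, one_mul, Nat.cast_zero, zero_add] at this ⊢
    linarith [abs_sub_abs_le_abs_sub (e 0 y) (e 0 (x 0))]
  | succ j ih =>
    rw [pow_succ'] at hx hex
    obtain ⟨z, hz, hez⟩ := hx.exists_abs_deriv_le (A := M * η ^ j) (h.derivChain 0 j.succ_pos)
      (by positivity) (fun i hi ↦ (hex i hi).trans_eq (by ring))
    have hz₀ : z 0 ∈ Icc c c' := hz.mem_Icc (by positivity)
    have deriv_bound {w : ℝ} (hw : w ∈ Icc c c') :
        |e 1 w| ≤ 3 ^ j * (2 * M) * (c' - c) ^ j + H * (c' - c) ^ (j + α) :=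
      ih h.tail (by positivity) hz (fun i hi ↦ (hez i hi).trans_eq (by ring)) hw hz₀
        (fun hy ↦ Real.dist_le_of_mem_Icc hy hz₀)
    have pow_bound : M * η ^ (j + 1) ≤ 3 ^ j * M * (c' - c) ^ (j + 1) := by
      rw [mul_assoc]
      exact (by gcongr : M * η ^ (j + 1) ≤ M * (c' - c) ^ (j + 1)).trans
        (le_mul_of_one_le_left (by positivity) (one_le_pow₀ (by norm_num)))
    have rpow_succ : (c' - c) ^ (((j + 1 : ℕ) : ℝ) + α) = (c' - c) ^ (j + α) * (c' - c) := by
      rw [← Real.rpow_add_one' hL (by positivity)]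
      push_cast
      ring_nf
    calc |e 0 y| ≤ |e 0 (x 0)|
            + (3 ^ j * (2 * M) * (c' - c) ^ j + H * (c' - c) ^ (j + α)) * |y - x 0| :=
          norm_le_add_mul_abs_sub (convex_Icc c c') (h.derivChain 0 j.succ_pos)
            (fun w ↦ deriv_bound) hx₀ hy
      _ ≤ 3 ^ j * M * (c' - c) ^ (j + 1)
            + (3 ^ j * (2 * M) * (c' - c) ^ j + H * (c' - c) ^ (j + α)) * (c' - c) := by
          gcongr
          exacts [(hex 0 (by positivity)).trans pow_bound, abs_sub_le hy]
      _ = 3 ^ (j + 1) * M * (c' - c) ^ (j + 1) + H * (c' - c) ^ (((j + 1 : ℕ) : ℝ) + α) := by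
          rw [rpow_succ]
          ring

lemma abs_deriv_le (h : HolderChain d (j + 1) α H (Icc c c')) (hα : 0 ≤ α) (hH : 0 ≤ H)
    (hc : c < c') (hA : ∀ y ∈ Icc c c', |d 0 y| ≤ A) {y : ℝ} (hy : y ∈ Icc c c') :
    |d 1 y| ≤ interpConst j * A / (c' - c) + H * (c' - c) ^ (j + α) := by
  have hL : 0 < c' - c := sub_pos.mpr hc
  have hA0 : 0 ≤ A := (abs_nonneg _).trans (hA y hy)
  set η := (c' - c) / 2 ^ (j + 1) with hη
  have hη0 : 0 < η := by positivity
  have hηL : η ≤ c' - c := div_le_self hL.le (one_le_pow₀ one_le_two)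
  have hL_eq : c' - c = 2 ^ (j + 1) * η := by rw [hη]; field_simp
  have equispaced :
      OrderedIntervals (2 * 2 ^ j) η c c' (fun i ↦ c + i * η) (fun i ↦ c + i * η) := by
    refine ⟨fun i _ ↦ ?_, fun _ _ ↦ le_rfl, fun i hi ↦ ?_, fun i k hik _ ↦ ?_, fun i k hik _ ↦ ?_⟩
    · exact le_add_of_nonneg_right (by positivity)
    · have : (i : ℝ) ≤ 2 ^ (j + 1) := by exact_mod_cast (pow_succ' 2 j).symm ▸ hi.le
      calc c + i * η ≤ c + 2 ^ (j + 1) * η := by gcongr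
        _ = c' := by rw [← hL_eq]; ring
    · gcongr
    · have : (i : ℝ) + 1 ≤ k := by exact_mod_cast hik
      calc c + i * η + η = c + (i + 1) * η := by ring
        _ ≤ c + k * η := by gcongr
  obtain ⟨z, hz, hdz⟩ := equispaced.exists_abs_deriv_le (A := A / η)
    (h.derivChain 0 j.succ_pos) (by positivity)
    (fun i hi ↦ (hA _ (equispaced.mem_Icc hi)).trans_eq (div_mul_cancel₀ A hη0.ne').symm)
  refine (h.tail.abs_le_of_small_at_points (M := 2 * (A / η) / η ^ j) hα hH hη0.le hηL
    (by positivity) hz (fun i hi ↦ (hdz i hi).trans_eq ?_) hy).trans_eq ?_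
  · field_simp
  · congr 1
    rw [interpConst, hL_eq, mul_pow]
    field_simp
    ring

end HolderChain

end Interpolation

section ZerosNearby

variable {d : ℕ → ℝ → ℝ} {j : ℕ} {α H c c' ρ t : ℝ} {u v : ℕ → ℝ}

namespace HolderChain

lemma abs_deriv_le_of_zeros (h : HolderChain d (j + 1) α H (Icc c c')) (hα : 0 ≤ α) (hH : 0 ≤ H)
    (huv : OrderedIntervals (2 ^ (j + 1)) 0 c c' u v)
    (hz : ∀ i < 2 ^ (j + 1), ∃ z ∈ Icc (u i) (v i), d 0 z = 0 ∨ d 1 z = 0) {y : ℝ}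
    (hy : y ∈ Icc c c') : |d 1 y| ≤ H * (c' - c) ^ (j + α) := by
  rw [pow_succ'] at huv hz
  obtain ⟨x, hx, hdx⟩ := huv.exists_deriv_eq_zero (h.derivChain 0 j.succ_pos) hz
  simpa using h.tail.abs_le_of_small_at_points hα hH le_rfl (sub_nonneg.mpr (hy.1.trans hy.2))
    le_rfl hx (fun i hi ↦ by simp [hdx i hi]) hy

end HolderChain

-- Otherwise `|g|` has an interior minimum on an interval around `t`, where `g * g' = 0`.
lemma abs_le_left_or_right_of_ne_zero {g g' : ℝ → ℝ} {p q t : ℝ}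
    (hg : ∀ y ∈ Icc p q, HasDerivWithinAt g (g' y) (Icc p q) y)
    (hz : ∀ y ∈ Icc p q, g y ≠ 0 ∧ g' y ≠ 0) :
    (∀ y ∈ Icc p t, |g y| ≤ |g t|) ∨ ∀ y ∈ Icc t q, |g y| ≤ |g t| := by
  by_contra! ⟨⟨x, hx, hxt⟩, ⟨y, hy, hyt⟩⟩
  have hxy : Icc x y ⊆ Icc p q := Icc_subset_Icc hx.1 hy.2
  obtain ⟨w, hw, hmin⟩ := isCompact_Icc.exists_isMinOn (nonempty_Icc.mpr (hx.2.trans hy.1))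
    (fun z hz ↦ ((hg z (hxy hz)).mono hxy).continuousWithinAt.abs)
  have hwt : |g w| ≤ |g t| := hmin ⟨hx.2, hy.1⟩
  have hxw : x < w := lt_of_le_of_ne hw.1 (by rintro rfl; exact hwt.not_gt hxt)
  have hwy : w < y := lt_of_le_of_ne hw.2 (by rintro rfl; exact hwt.not_gt hyt)
  have local_min : IsLocalMin (fun z ↦ g z ^ 2) w := by
    filter_upwards [Icc_mem_nhds hxw hwy] with z hz using sq_le_sq.mpr (hmin hz)
  have sq_deriv_eq_zero := local_min.hasDerivAt_eq_zero
    ((((hg w (hxy hw)).mono hxy).hasDerivAt (Icc_mem_nhds hxw hwy)).pow 2)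
  simp [hz w (hxy hw)] at sq_deriv_eq_zero

lemma HolderChain.exists_zero_near (h : HolderChain d (j + 1) α H (Icc (t - ρ) (t + ρ)))
    (hα : 0 ≤ α) (hH : 0 ≤ H) (hρ : 0 < ρ)
    (ht : interpConst j * |d 0 t| / ρ + H * ρ ^ (j + α) < |d 1 t|) :
    ∃ z ∈ Icc (t - ρ) (t + ρ), d 0 z = 0 ∨ d 1 z = 0 := by
  contrapose! ht
  rcases abs_le_left_or_right_of_ne_zero (t := t) (h.derivChain 0 j.succ_pos) ht with hA | hA
  · simpa using (h.mono (Icc_subset_Icc_right (by linarith))).abs_deriv_le hα hH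
      (sub_lt_self t hρ) hA ⟨by linarith, le_rfl⟩
  · simpa using (h.mono (Icc_subset_Icc_left (by linarith))).abs_deriv_le hα hH
      (lt_add_of_pos_right t hρ) hA ⟨le_rfl, by linarith⟩

end ZerosNearby

section RootSlope

variable {g g' : ℝ → ℝ} {m s r t x : ℝ}

/-- The absolute value of the derivative of `|g|^{1/m}`, where `g'` is the derivative of `g`. For
`m > 1` it takes the value `0` at the zeros of `g`. -/
def rootSlope (m : ℝ) (g g' : ℝ → ℝ) (t : ℝ) : ℝ := |g' t| * |g t| ^ (m⁻¹ - 1) / m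

/-- The length `δ` for which `|x| = r^{s + 1} δ^s`. If `|g|^{1/(s + 1)}` has slope of size `r` where
`g` has slope `x`, then `|g|` is of size `(r δ)^{s + 1} = |x| δ` there. -/
def slopeScale (s r x : ℝ) : ℝ := (|x| / r ^ (s + 1)) ^ s⁻¹

lemma rpow_mul_slopeScale_rpow (hs : 0 < s) (hr : 0 < r) (x : ℝ) :
    r ^ (s + 1) * slopeScale s r x ^ s = |x| := by
  rw [slopeScale, Real.rpow_inv_rpow (by positivity) hs.ne', mul_div_cancel₀ _ (by positivity)]

lemma slopeScale_pos (hr : 0 < r) (hx : x ≠ 0) : 0 < slopeScale s r x := by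
  have := abs_pos.mpr hx
  rw [slopeScale]
  positivity

lemma slopeScale_le_of_abs_le_mul_rpow {H L : ℝ} (hs : 0 < s) (hr : 0 < r) (hH : 0 ≤ H)
    (hL : 0 ≤ L) (hx : |x| ≤ H * L ^ s) :
    slopeScale s r x ≤ (H / r ^ (s + 1)) ^ s⁻¹ * L := by
  rw [slopeScale, Real.rpow_inv_le_iff_of_pos (by positivity) (by positivity) hs,
    Real.mul_rpow (by positivity) hL, Real.rpow_inv_rpow (by positivity) hs.ne', div_mul_eq_mul_div]
  gcongr

lemma ne_zero_of_rootSlope_pos (hm : 1 < m) (h : 0 < rootSlope m g g' t) : g t ≠ 0 ∧ g' t ≠ 0 := by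
  constructor <;> intro h0 <;> refine h.ne' ?_
  · have : m⁻¹ - 1 ≠ 0 := (sub_neg.mpr (inv_lt_one_of_one_lt₀ hm)).ne
    simp [rootSlope, h0, Real.zero_rpow this]
  · simp [rootSlope, h0]

lemma abs_le_abs_mul_slopeScale (hs : 0 < s) (hr : 0 < r) (ht : r < rootSlope (s + 1) g g' t) :
    |g t| ≤ |g' t| * slopeScale s r (g' t) := by
  obtain ⟨hg, hg'⟩ := ne_zero_of_rootSlope_pos (by linarith) (hr.trans ht)
  set δ := slopeScale s r (g' t) with hδ
  have hδ0 : 0 ≤ δ := by rw [hδ, slopeScale]; positivity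
  have slope_gt : r * |g t| ^ ((s + 1)⁻¹ * s) < |g' t| := by
    have exponent : (s + 1)⁻¹ - 1 = -((s + 1)⁻¹ * s) := by field_simp; ring
    rw [rootSlope, exponent, Real.rpow_neg (abs_nonneg _), ← div_eq_mul_inv] at ht
    exact (lt_div_iff₀ (by positivity)).mp (ht.trans_le (div_le_self (by positivity) (by linarith)))
  have root_le : |g t| ^ (s + 1)⁻¹ ≤ r * δ := by
    rw [← Real.rpow_le_rpow_iff (by positivity) (by positivity) hs,
      ← Real.rpow_mul (abs_nonneg _), Real.mul_rpow hr.le hδ0]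
    refine le_of_mul_le_mul_left (slope_gt.le.trans_eq ?_) hr
    rw [← rpow_mul_slopeScale_rpow hs hr, Real.rpow_add_one hr.ne']
    ring
  calc |g t| ≤ (r * δ) ^ (s + 1) :=
        (Real.rpow_inv_le_iff_of_pos (abs_nonneg _) (by positivity) (by positivity)).mp root_le
    _ = r ^ (s + 1) * δ ^ s * δ := by
        rw [Real.mul_rpow hr.le hδ0, Real.rpow_add_one' hδ0 (by positivity), mul_assoc]
    _ = |g' t| * δ := by rw [rpow_mul_slopeScale_rpow hs hr]

end RootSlope

section Covering

lemma measure_le_of_sum_closedBall_le {X : Type*} [PseudoMetricSpace X]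
    [TopologicalSpace.SeparableSpace X] [MeasurableSpace X] {μ : Measure X} {E : Set X} {ρ : X → ℝ}
    {R : ℝ} {V : ENNReal} (hρ : ∀ x ∈ E, 0 < ρ x) (hρR : ∀ x ∈ E, ρ x ≤ R)
    (hV : ∀ T : Finset X, ↑T ⊆ E →
      (T : Set X).PairwiseDisjoint (fun x ↦ Metric.closedBall x (ρ x)) →
      ∑ x ∈ T, μ (Metric.closedBall x (5 * ρ x)) ≤ V) : μ E ≤ V := by
  obtain ⟨U, hUE, hdisj, hcover⟩ :=
    Vitali.exists_disjoint_subfamily_covering_enlargement_closedBall E id ρ R hρR 5 (by norm_num)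
  have hU : U.Countable := hdisj.countable_of_nonempty_interior fun x hx ↦
    ⟨x, Metric.ball_subset_interior_closedBall (Metric.mem_ball_self (hρ x (hUE hx)))⟩
  have subset_enlarged : E ⊆ ⋃ x ∈ U, Metric.closedBall x (5 * ρ x) := fun x hx ↦
    let ⟨y, hy, hxy⟩ := hcover x hx
    mem_biUnion hy (hxy (Metric.mem_closedBall_self (hρ x hx).le))
  calc μ E ≤ ∑' x : U, μ (Metric.closedBall (x : X) (5 * ρ x)) :=
        (measure_mono subset_enlarged).trans (measure_biUnion_le μ hU _)
    _ ≤ V := by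
      rw [ENNReal.tsum_eq_iSup_sum]
      refine iSup_le fun T ↦ ?_
      have hTU : (T.map (Function.Embedding.subtype (· ∈ U)) : Set X) ⊆ U := by simp
      simpa using hV _ (hTU.trans hUE) (hdisj.subset hTU)

lemma exists_strictMonoOn_image_range_eq {α : Type*} [LinearOrder α] [Nonempty α] (T : Finset α) :
    ∃ t : ℕ → α, StrictMonoOn t (Iio T.card) ∧ (Finset.range T.card).image t = T := by
  let e := T.orderEmbOfFin rfl
  let t : ℕ → α := Function.extend Fin.val e fun _ ↦ Classical.arbitrary α
  have t_apply {i : ℕ} (hi : i < T.card) : t i = e ⟨i, hi⟩ :=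
    Fin.val_injective.extend_apply e _ ⟨i, hi⟩
  have ht : StrictMonoOn t (Iio T.card) := fun i hi k hk hik ↦ by
    rw [t_apply hi, t_apply hk]
    exact e.strictMono hik
  refine ⟨t, ht, Finset.eq_of_subset_of_card_le (Finset.image_subset_iff.mpr fun i hi ↦ ?_) ?_⟩
  · rw [t_apply (Finset.mem_range.mp hi)]
    exact T.orderEmbOfFin_mem rfl _
  · rw [Finset.card_image_of_injOn (by simpa using ht.injOn), Finset.card_range]

lemma sum_range_shift_sub_le {u : ℕ → ℝ} {a b : ℝ} {l N : ℕ} (hu : ∀ i < l + N, u i ∈ Icc a b) :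
    ∑ i ∈ Finset.range l, (u (i + N) - u i) ≤ N * (b - a) := by
  have split_at_N := Finset.sum_range_add u N l
  have split_at_l := Finset.sum_range_add u l N
  have ends_le : ∑ i ∈ Finset.range N, (u (l + i) - u i) ≤ N * (b - a) := by
    refine (Finset.sum_le_card_nsmul _ _ (b - a) fun i hi ↦ ?_).trans_eq (by simp)
    have hi : i < N := Finset.mem_range.mp hi
    exact sub_le_sub (hu (l + i) (by omega)).2 (hu i (by omega)).1
  rw [add_comm N l] at split_at_N
  simp only [Finset.sum_sub_distrib, add_comm _ N] at ends_le ⊢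
  linarith

lemma sum_range_le_of_le_mul_shift_sub {u w : ℕ → ℝ} {a b κ D : ℝ} {n N : ℕ} (hab : a ≤ b)
    (hκ : 0 ≤ κ) (hD : 0 ≤ D) (hu : ∀ i < n, u i ∈ Icc a b) (hwD : ∀ i < n, w i ≤ D)
    (hw : ∀ i, i + N < n → w i ≤ κ * (u (i + N) - u i)) :
    ∑ i ∈ Finset.range n, w i ≤ N * (κ * (b - a) + D) := by
  have sum_le_card_mul {t : ℕ → ℝ} {p : ℕ} (ht : ∀ i < p, t i ≤ D) :
      ∑ i ∈ Finset.range p, t i ≤ p * D :=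
    (Finset.sum_le_card_nsmul _ t D fun i hi ↦ ht i (Finset.mem_range.mp hi)).trans_eq (by simp)
  rcases le_total n N with hn | hn
  · calc ∑ i ∈ Finset.range n, w i ≤ n * D := sum_le_card_mul hwD
      _ ≤ N * D := by gcongr
      _ ≤ N * (κ * (b - a) + D) := by
        gcongr
        exact le_add_of_nonneg_left (mul_nonneg hκ (sub_nonneg.mpr hab))
  · obtain ⟨l, rfl⟩ := Nat.exists_eq_add_of_le' hn
    have sum_init_le : ∑ i ∈ Finset.range l, w i ≤ κ * (N * (b - a)) :=
      calc ∑ i ∈ Finset.range l, w i ≤ ∑ i ∈ Finset.range l, κ * (u (i + N) - u i) :=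
            Finset.sum_le_sum fun i hi ↦ hw i (by simpa using hi)
        _ ≤ κ * (N * (b - a)) := by
            rw [← Finset.mul_sum]
            gcongr
            exact sum_range_shift_sub_le hu
    have sum_tail_le : ∑ i ∈ Finset.range N, w (l + i) ≤ N * D :=
      sum_le_card_mul fun i hi ↦ hwD (l + i) (by omega)
    rw [Finset.sum_range_add]
    linarith

lemma OrderedIntervals.window {n N i : ℕ} {η c c' : ℝ} {u v : ℕ → ℝ}
    (h : OrderedIntervals n η c c' u v) (hi : i + N < n) :
    OrderedIntervals N η (u i) (u (i + N)) (fun l ↦ u (i + l)) (fun l ↦ v (i + l)) where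
  left_le l hl := by
    obtain rfl | hl0 := Nat.eq_zero_or_pos l
    · exact le_rfl
    · exact (h.le i (by omega)).trans (h.lt i (i + l) (by omega) (by omega)).le
  le l hl := h.le (i + l) (by omega)
  le_right l hl := (h.lt (i + l) (i + N) (by omega) hi).le
  lt l k hlk hk := h.lt (i + l) (i + k) (by omega) (by omega)
  add_le l k hlk hk := h.add_le (i + l) (i + k) (by omega) (by omega)

variable {a b κ D : ℝ} {N : ℕ} {E : Set ℝ} {ρ : ℝ → ℝ}

lemma exists_orderedIntervals_of_disjoint_closedBall {T : Finset ℝ} (hρ : ∀ t ∈ T, 0 < ρ t)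
    (hT : (T : Set ℝ).PairwiseDisjoint fun t ↦ Metric.closedBall t (ρ t))
    (hball : ∀ t ∈ T, Metric.closedBall t (ρ t) ⊆ Icc a b) :
    ∃ t : ℕ → ℝ, OrderedIntervals T.card 0 a b (fun i ↦ t i - ρ (t i)) (fun i ↦ t i + ρ (t i)) ∧
      (∀ i < T.card, t i ∈ T) ∧ ∀ w : ℝ → ℝ, ∑ x ∈ T, w x = ∑ i ∈ Finset.range T.card, w (t i) := by
  obtain ⟨t, ht_mono, ht_image⟩ := exists_strictMonoOn_image_range_eq T
  have ht_mem {i : ℕ} (hi : i < T.card) : t i ∈ T :=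
    ht_image ▸ Finset.mem_image_of_mem t (Finset.mem_range.mpr hi)
  have hρt {i : ℕ} (hi : i < T.card) : 0 < ρ (t i) := hρ _ (ht_mem hi)
  have endpoint_mem {i : ℕ} (hi : i < T.card) {x : ℝ} (hx : |x - t i| = ρ (t i)) : x ∈ Icc a b :=
    hball _ (ht_mem hi) hx.le
  have lt (i k : ℕ) (hik : i < k) (hk : k < T.card) : t i + ρ (t i) < t k - ρ (t k) := by
    have hi := hik.trans hk
    have radii_lt_dist := (disjoint_closedBall_closedBall_iff (hρt hi).le (hρt hk).le).mp
      (hT (ht_mem hi) (ht_mem hk) (ht_mono hi hk hik).ne)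
    rw [dist_comm, Real.dist_eq, abs_of_pos (sub_pos.mpr (ht_mono hi hk hik))] at radii_lt_dist
    linarith
  refine ⟨t, ⟨fun i hi ↦ (endpoint_mem hi ?_).1, fun i hi ↦ by linarith [hρt hi],
    fun i hi ↦ (endpoint_mem hi ?_).2, lt, fun i k hik hk ↦ ?_⟩, fun i ↦ ht_mem, fun w ↦ ?_⟩
  · simp [abs_of_pos (hρt hi)]
  · simp [abs_of_pos (hρt hi)]
  · simpa using (lt i k hik hk).le
  · conv_lhs => rw [← ht_image]
    exact Finset.sum_image (by simpa using ht_mono.injOn)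

/-- For any `N` points `t i` of `E`, `i < N`, whose intervals `[t i - ρ (t i), t i + ρ (t i)]` are
disjoint, listed from left to right, and contained in `[c, c'] ⊆ I`, the first radius is at most
`κ` times the length of `[c, c']`. -/
def WindowBound (N : ℕ) (κ : ℝ) (I E : Set ℝ) (ρ : ℝ → ℝ) : Prop :=
  ∀ (c c' : ℝ) (t : ℕ → ℝ), (∀ i < N, t i ∈ E) → Icc c c' ⊆ I →
    OrderedIntervals N 0 c c' (fun i ↦ t i - ρ (t i)) (fun i ↦ t i + ρ (t i)) →
    ρ (t 0) ≤ κ * (c' - c)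

lemma WindowBound.sum_le (hwindow : WindowBound N κ (Ioo a b) E ρ) (hab : a ≤ b) (hκ : 0 ≤ κ)
    (hD : 0 ≤ D) {T : Finset ℝ} (hTE : ↑T ⊆ E) (hρ : ∀ t ∈ T, 0 < ρ t) (hρD : ∀ t ∈ T, ρ t ≤ D)
    (hT : (T : Set ℝ).PairwiseDisjoint fun t ↦ Metric.closedBall t (ρ t))
    (hball : ∀ t ∈ T, Metric.closedBall t (ρ t) ⊆ Ioo a b) :
    ∑ t ∈ T, ρ t ≤ N * (κ * (b - a) + D) := by
  obtain ⟨t, ht, ht_mem, sum_eq⟩ := exists_orderedIntervals_of_disjoint_closedBall hρ hT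
    fun t ht ↦ (hball t ht).trans Ioo_subset_Icc_self
  have left_mem {i : ℕ} (hi : i < T.card) : t i - ρ (t i) ∈ Ioo a b :=
    hball _ (ht_mem i hi) (by simp [abs_of_pos (hρ _ (ht_mem i hi))])
  rw [sum_eq]
  exact sum_range_le_of_le_mul_shift_sub hab hκ hD
    (fun i hi ↦ Ioo_subset_Icc_self (left_mem hi)) (fun i hi ↦ hρD _ (ht_mem i hi))
    fun i hi ↦ hwindow _ _ (fun l ↦ t (i + l)) (fun l hl ↦ hTE (ht_mem _ (by omega)))
      (Icc_subset_Ioo (left_mem (by omega)).1 (left_mem hi).2) (ht.window hi)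

lemma WindowBound.volume_le_of_closedBall_subset (hwindow : WindowBound N κ (Ioo a b) E ρ)
    (hab : a ≤ b) (hκ : 0 ≤ κ) (hD : 0 ≤ D) (hρ : ∀ t ∈ E, 0 < ρ t) (hρD : ∀ t ∈ E, ρ t ≤ D)
    (hball : ∀ t ∈ E, Metric.closedBall t (ρ t) ⊆ Ioo a b) :
    volume E ≤ ENNReal.ofReal (10 * (N * (κ * (b - a) + D))) := by
  refine measure_le_of_sum_closedBall_le hρ hρD fun T hTE hT ↦ ?_
  simp only [Real.volume_closedBall]
  rw [← ENNReal.ofReal_sum_of_nonneg fun t ht ↦ by have := hρ t (hTE ht); positivity]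
  refine ENNReal.ofReal_le_ofReal ?_
  calc ∑ t ∈ T, 2 * (5 * ρ t) = 10 * ∑ t ∈ T, ρ t := by
        rw [Finset.mul_sum]
        exact Finset.sum_congr rfl fun t _ ↦ by ring
    _ ≤ 10 * (N * (κ * (b - a) + D)) := by
        gcongr
        exact hwindow.sum_le hab hκ hD hTE (fun t ht ↦ hρ t (hTE ht)) (fun t ht ↦ hρD t (hTE ht)) hT
          fun t ht ↦ hball t (hTE ht)

lemma WindowBound.volume_le (hwindow : WindowBound N κ (Ioo a b) E ρ) (hN : 0 < N) (hab : a ≤ b)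
    (hκ : 0 ≤ κ) (hD : 0 ≤ D) (hE : E ⊆ Ioo a b) (hρ : ∀ t ∈ E, 0 < ρ t)
    (hρD : ∀ t ∈ E, ρ t ≤ D) : volume E ≤ ENNReal.ofReal (12 * (N * (κ * (b - a) + D))) := by
  let inner : Set ℝ := {t ∈ E | Metric.closedBall t (ρ t) ⊆ Ioo a b}
  have inner_le : volume inner ≤ ENNReal.ofReal (10 * (N * (κ * (b - a) + D))) :=
    WindowBound.volume_le_of_closedBall_subset
      (fun c c' t ht ↦ hwindow c c' t fun i hi ↦ (ht i hi).1) hab hκ hD (fun t ht ↦ hρ t ht.1)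
      (fun t ht ↦ hρD t ht.1) fun t ht ↦ ht.2
  have subset_strips : E ⊆ inner ∪ (Icc a (a + D) ∪ Icc (b - D) b) := by
    intro t ht
    have := hρD t ht
    by_cases hball : a < t - ρ t ∧ t + ρ t < b
    · refine Or.inl ⟨ht, ?_⟩
      rw [Real.closedBall_eq_Icc]
      exact Icc_subset_Ioo hball.1 hball.2
    · rcases not_and_or.mp hball with h | h
      · exact Or.inr (Or.inl ⟨(hE ht).1.le, by linarith⟩)
      · exact Or.inr (Or.inr ⟨by linarith, (hE ht).2.le⟩)
  have : 0 ≤ b - a := sub_nonneg.mpr hab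
  calc volume E
      ≤ volume inner + (volume (Icc a (a + D)) + volume (Icc (b - D) b)) :=
        (measure_mono subset_strips).trans <| (measure_union_le _ _).trans <|
          add_le_add_right (measure_union_le _ _) _
    _ ≤ ENNReal.ofReal (10 * (N * (κ * (b - a) + D)))
          + (ENNReal.ofReal D + ENNReal.ofReal D) := by
        gcongr <;> simp
    _ = ENNReal.ofReal (10 * (N * (κ * (b - a) + D)) + (D + D)) := by
        rw [← ENNReal.ofReal_add hD hD, ← ENNReal.ofReal_add (by positivity) (by positivity)]
    _ ≤ ENNReal.ofReal (12 * (N * (κ * (b - a) + D))) := by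
        have : D ≤ N * (κ * (b - a) + D) :=
          (le_add_of_nonneg_left (by positivity)).trans
            (le_mul_of_one_le_left (by positivity) (mod_cast hN))
        gcongr
        linarith

end Covering

section WeakType

variable {d : ℕ → ℝ → ℝ} {j : ℕ} {a b α s H G r : ℝ}

lemma interp_lt_abs_of_abs_le_mul_slopeScale {C x y : ℝ} (hs : 0 < s) (hr : 0 < r) (hC : 2 ≤ C)
    (hH : 0 ≤ H) (hrH : (2 * C) ^ (s + 1) * H < r ^ (s + 1)) (hy : y ≠ 0)
    (hx : |x| ≤ |y| * slopeScale s r y) :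
    C * |x| / (2 * C * slopeScale s r y) + H * (2 * C * slopeScale s r y) ^ s < |y| := by
  have hδ : 0 < slopeScale s r y := slopeScale_pos hr hy
  have hy_eq := rpow_mul_slopeScale_rpow hs hr y
  set δ := slopeScale s r y
  have first_le : C * |x| / (2 * C * δ) ≤ |y| / 2 := by
    rw [div_le_iff₀ (by positivity)]
    calc C * |x| ≤ C * (|y| * δ) := by gcongr
      _ = |y| / 2 * (2 * C * δ) := by ring
  have second_lt : H * (2 * C * δ) ^ s < |y| / 2 := by
    rw [lt_div_iff₀ two_pos]
    calc H * (2 * C * δ) ^ s * 2 ≤ H * (2 * C * δ) ^ s * (2 * C) := by gcongr; linarith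
      _ = (2 * C) ^ (s + 1) * H * δ ^ s := by
          rw [Real.mul_rpow (by positivity) hδ.le, Real.rpow_add_one (by positivity)]
          ring
      _ < r ^ (s + 1) * δ ^ s := by gcongr
      _ = |y| := hy_eq
  linarith

lemma HolderChain.windowBound (h : HolderChain d (j + 1) α H (Ioo a b)) (hα : 0 < α) (hH : 0 ≤ H)
    (hr : 0 < r) (hrH : (2 * interpConst j) ^ (j + α + 1) * H < r ^ (j + α + 1)) :
    WindowBound (2 ^ (j + 1)) (2 * interpConst j * (H / r ^ (j + α + 1)) ^ (j + α)⁻¹) (Ioo a b)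
      {t ∈ Ioo a b | r < rootSlope (j + α + 1) (d 0) (d 1) t}
      (fun t ↦ 2 * interpConst j * slopeScale (j + α) r (d 1 t)) := by
  intro c c' t ht hcc' ht_ordered
  have hs : 0 < j + α := by positivity
  have hC : 2 ≤ interpConst j := two_le_interpConst j
  have d1_ne_zero (i) (hi : i < 2 ^ (j + 1)) : d 1 (t i) ≠ 0 :=
    (ne_zero_of_rootSlope_pos (by linarith) (hr.trans (ht i hi).2)).2
  have bound := (h.mono hcc').abs_deriv_le_of_zeros (y := t 0) hα.le hH ht_ordered
    (fun i hi ↦ (h.mono <| (Icc_subset_Icc (ht_ordered.left_le i hi)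
      (ht_ordered.le_right i hi)).trans hcc').exists_zero_near hα.le hH
      (mul_pos (by linarith) (slopeScale_pos hr (d1_ne_zero i hi)))
      (interp_lt_abs_of_abs_le_mul_slopeScale hs hr hC hH hrH (d1_ne_zero i hi)
        (abs_le_abs_mul_slopeScale hs hr (ht i hi).2)))
    ⟨by linarith [ht_ordered.left_le 0 (by positivity), ht_ordered.le 0 (by positivity)],
      by linarith [ht_ordered.le_right 0 (by positivity), ht_ordered.le 0 (by positivity)]⟩
  have hL : 0 ≤ c' - c := by
    linarith [ht_ordered.left_le 0 (by positivity), ht_ordered.le 0 (by positivity),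
      ht_ordered.le_right 0 (by positivity)]
  beta_reduce
  rw [mul_assoc (2 * interpConst j)]
  exact mul_le_mul_of_nonneg_left (slopeScale_le_of_abs_le_mul_rpow hs hr hH hL bound)
    (by linarith)

lemma HolderChain.volume_rootSlope_gt_le (h : HolderChain d (j + 1) α H (Ioo a b)) (hα : 0 < α)
    (hab : a ≤ b) (hH : 0 ≤ H) (hG0 : 0 ≤ G) (hG : ∀ t ∈ Ioo a b, |d 1 t| ≤ G) (hr : 0 < r)
    (hrH : (2 * interpConst j) ^ (j + α + 1) * H < r ^ (j + α + 1)) :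
    volume.real {t ∈ Ioo a b | r < rootSlope (j + α + 1) (d 0) (d 1) t} ≤
      24 * interpConst j * 2 ^ (j + 1) * ((H / r ^ (j + α + 1)) ^ (j + α)⁻¹ * (b - a)
        + (G / r ^ (j + α + 1)) ^ (j + α)⁻¹) := by
  have hs : 0 < j + α := by positivity
  have hC : 0 < interpConst j := two_pos.trans_le (two_le_interpConst j)
  have : 0 ≤ b - a := sub_nonneg.mpr hab
  refine (ENNReal.toReal_le_of_le_ofReal (by positivity)
    ((h.windowBound hα hH hr hrH).volume_le (by positivity) hab (by positivity)
      (D := 2 * interpConst j * (G / r ^ (j + α + 1)) ^ (j + α)⁻¹) (by positivity)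
      (sep_subset _ _) (fun t ht ↦ ?_) fun t ht ↦ ?_)).trans_eq ?_
  · have := slopeScale_pos (s := j + α) hr
      (ne_zero_of_rootSlope_pos (by linarith) (hr.trans ht.2)).2
    positivity
  · gcongr
    simpa using slopeScale_le_of_abs_le_mul_rpow (L := 1) hs hr hG0 zero_le_one
      (by simpa using hG t ht.1)
  · push_cast
    ring

lemma mul_rpow_slopeScale_eq {Y : ℝ} (hs : 0 < s) (hr : 0 < r) (hY : 0 ≤ Y) :
    r * ((Y / r ^ (s + 1)) ^ s⁻¹) ^ (s / (s + 1)) = Y ^ (s + 1)⁻¹ := by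
  have exponent : s⁻¹ * (s / (s + 1)) = (s + 1)⁻¹ := by field_simp
  rw [← Real.rpow_mul (by positivity), exponent, Real.div_rpow hY (by positivity),
    Real.rpow_rpow_inv hr.le (by positivity), mul_div_cancel₀ _ hr.ne']

lemma mul_rpow_le_of_le_mul_slopeScale {K L V : ℝ} (hs : 0 < s) (hr : 0 < r) (hK : 1 ≤ K)
    (hH : 0 ≤ H) (hG : 0 ≤ G) (hL : 0 ≤ L) (hV : 0 ≤ V)
    (hVK : V ≤ K * max ((H / r ^ (s + 1)) ^ s⁻¹ * L) ((G / r ^ (s + 1)) ^ s⁻¹)) :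
    r * V ^ (s / (s + 1)) ≤
      K * max (H ^ (s + 1)⁻¹ * L ^ (s / (s + 1))) (G ^ (s + 1)⁻¹) := by
  set q := s / (s + 1)
  set M := max ((H / r ^ (s + 1)) ^ s⁻¹ * L) ((G / r ^ (s + 1)) ^ s⁻¹) with hM
  have hM0 : 0 ≤ M := le_max_of_le_right (by positivity)
  have max_rpow_le : r * M ^ q ≤ max (H ^ (s + 1)⁻¹ * L ^ q) (G ^ (s + 1)⁻¹) := by
    rcases max_choice ((H / r ^ (s + 1)) ^ s⁻¹ * L) ((G / r ^ (s + 1)) ^ s⁻¹) with h | h <;>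
      rw [hM, h]
    · rw [Real.mul_rpow (by positivity) hL, ← mul_assoc, mul_rpow_slopeScale_eq hs hr hH]
      exact le_max_left _ _
    · rw [mul_rpow_slopeScale_eq hs hr hG]
      exact le_max_right _ _
  calc r * V ^ q ≤ r * (K * M) ^ q := by gcongr
    _ = K ^ q * (r * M ^ q) := by rw [Real.mul_rpow (by positivity) hM0]; ring
    _ ≤ K * (r * M ^ q) := by
        gcongr
        exact Real.rpow_le_self_of_one_le hK (div_le_one_of_le₀ (by linarith) (by positivity))
    _ ≤ K * max (H ^ (s + 1)⁻¹ * L ^ q) (G ^ (s + 1)⁻¹) := by gcongr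

/-- The constant of the weak-type estimate for the slope of `|g|^{1/(j + 1 + α)}`, where `g` is of
class `C^{j + 1, α}`. -/
def weakConst (j : ℕ) : ℝ := 48 * interpConst j * 2 ^ (j + 1)

lemma two_mul_interpConst_le_weakConst (j : ℕ) : 2 * interpConst j ≤ weakConst j := by
  have hC : 2 ≤ interpConst j := two_le_interpConst j
  calc 2 * interpConst j ≤ 48 * interpConst j := by linarith
    _ ≤ weakConst j := le_mul_of_one_le_right (by positivity) (one_le_pow₀ one_le_two)

lemma one_le_weakConst (j : ℕ) : 1 ≤ weakConst j := by
  linarith [two_le_interpConst j, two_mul_interpConst_le_weakConst j]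

theorem HolderChain.mul_volume_rootSlope_gt_rpow_le (h : HolderChain d (j + 1) α H (Ioo a b))
    (hα : 0 < α) (hab : a ≤ b) (hH : 0 ≤ H) (hG0 : 0 ≤ G) (hG : ∀ t ∈ Ioo a b, |d 1 t| ≤ G)
    (hs : s = j + α) (hr : 0 ≤ r) :
    r * volume.real {t ∈ Ioo a b | r < rootSlope (s + 1) (d 0) (d 1) t} ^ (s / (s + 1)) ≤
      weakConst j * max (H ^ (s + 1)⁻¹ * (b - a) ^ (s / (s + 1))) (G ^ (s + 1)⁻¹) := by
  have hs0 : 0 < s := by rw [hs]; positivity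
  have hC : 2 ≤ interpConst j := two_le_interpConst j
  have hK : 1 ≤ weakConst j := one_le_weakConst j
  have hL : 0 ≤ b - a := sub_nonneg.mpr hab
  by_cases hrH : (2 * interpConst j) ^ (s + 1) * H < r ^ (s + 1)
  · have hr0 : 0 < r := hr.lt_of_ne' fun h0 ↦ by
      rw [h0, Real.zero_rpow (by positivity)] at hrH
      exact hrH.not_ge (by positivity)
    refine mul_rpow_le_of_le_mul_slopeScale hs0 hr0 hK hH hG0 hL measureReal_nonneg ?_
    subst hs
    refine (h.volume_rootSlope_gt_le hα hab hH hG0 hG hr0 hrH).trans ?_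
    calc _ ≤ 24 * interpConst j * 2 ^ (j + 1) *
          (2 * max ((H / r ^ (j + α + 1)) ^ (j + α)⁻¹ * (b - a))
            ((G / r ^ (j + α + 1)) ^ (j + α)⁻¹)) := by
          gcongr
          rw [two_mul]
          exact add_le_add (le_max_left _ _) (le_max_right _ _)
      _ = _ := by rw [weakConst]; ring
  · have r_le : r ≤ 2 * interpConst j * H ^ (s + 1)⁻¹ := by
      have := Real.rpow_le_rpow (by positivity) (not_lt.mp hrH)
        (inv_nonneg.mpr (by positivity : 0 ≤ s + 1))
      rwa [Real.rpow_rpow_inv hr (by positivity), Real.mul_rpow (by positivity) hH,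
        Real.rpow_rpow_inv (by positivity) (by positivity)] at this
    have volume_le : volume.real {t ∈ Ioo a b | r < rootSlope (s + 1) (d 0) (d 1) t} ≤ b - a :=
      (measureReal_mono (sep_subset _ _) measure_Ioo_lt_top.ne).trans_eq
        (Real.volume_real_Ioo_of_le hab)
    calc _ ≤ 2 * interpConst j * H ^ (s + 1)⁻¹ * (b - a) ^ (s / (s + 1)) := by gcongr
      _ = 2 * interpConst j * (H ^ (s + 1)⁻¹ * (b - a) ^ (s / (s + 1))) := by ring
      _ ≤ _ := by
          gcongr
          exacts [two_mul_interpConst_le_weakConst j, le_max_left _ _]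

end WeakType

section WeakIntegrable

variable {X : Type*} [MeasurableSpace X] {μ : Measure X} {q W : ℝ}

lemma measureReal_le_of_mul_rpow_le {r : ℝ} {s : Set X} (hq : 0 < q) (hr : 0 < r) (hW : 0 ≤ W)
    (hw : r * μ.real s ^ q ≤ W) : μ.real s ≤ W ^ q⁻¹ * r ^ (-q⁻¹) := by
  have : μ.real s ^ q ≤ W / r := by rwa [le_div_iff₀' hr]
  rw [← Real.le_rpow_inv_iff_of_pos measureReal_nonneg (by positivity) hq,
    Real.div_rpow hW hr.le] at this
  rwa [Real.rpow_neg hr.le, ← div_eq_mul_inv]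

lemma integrable_of_forall_mul_measureReal_rpow_le [IsFiniteMeasure μ] {h : X → ℝ} (hq0 : 0 < q)
    (hq1 : q < 1) (h0 : ∀ x, 0 ≤ h x) (hh : AEStronglyMeasurable h μ)
    (hw : ∀ r, 0 ≤ r → r * μ.real {x | r < h x} ^ q ≤ W) : Integrable h μ := by
  have hW : 0 ≤ W := by simpa using hw 0 le_rfl
  refine ⟨hh, ?_⟩
  rw [hasFiniteIntegral_iff_ofReal (.of_forall h0),
    lintegral_eq_lintegral_meas_lt μ (.of_forall h0) hh.aemeasurable,
    ← Ioc_union_Ioi_eq_Ioi zero_le_one]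
  refine (lintegral_union_le _ _ _).trans_lt (ENNReal.add_lt_top.mpr ⟨?_, ?_⟩)
  · calc ∫⁻ r in Ioc 0 1, μ {x | r < h x} ≤ ∫⁻ _ in Ioc (0 : ℝ) 1, μ univ :=
          lintegral_mono fun _ ↦ measure_mono (subset_univ _)
      _ < ⊤ := by simp
  · have tail_integrable : IntegrableOn (fun r : ℝ ↦ W ^ q⁻¹ * r ^ (-q⁻¹)) (Ioi 1) :=
      (integrableOn_Ioi_rpow_of_lt (neg_lt_neg ((one_lt_inv₀ hq0).mpr hq1)) one_pos).const_mul _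
    refine (setLIntegral_mono' measurableSet_Ioi fun r hr ↦ ?_).trans_lt
      tail_integrable.lintegral_lt_top
    have hr0 : 0 < r := one_pos.trans hr
    rw [← ofReal_measureReal]
    exact ENNReal.ofReal_le_ofReal (measureReal_le_of_mul_rpow_le hq0 hr0 hW (hw r hr0.le))

end WeakIntegrable

section AbsolutelyContinuous

variable {E : Type*} [NormedAddCommGroup E] {f : ℝ → E} {h : ℝ → ℝ} {S : Set ℝ}

lemma exists_pos_forall_setIntegral_lt {X : Type*} [MeasurableSpace X] {μ : Measure X}
    {φ : X → ℝ} (hφ : Integrable φ μ) {ε : ℝ} (hε : 0 < ε) :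
    ∃ δ : ℝ, 0 < δ ∧ ∀ s, μ s < ENNReal.ofReal δ → ∫ x in s, φ x ∂μ < ε := by
  have small := (hφ.tendsto_setIntegral_nhds_zero (s := id)
    Filter.tendsto_comap).eventually_lt_const hε
  obtain ⟨δ, hδ, hsmall⟩ := (ENNReal.nhds_zero_basis.comap μ).eventually_iff.mp small
  obtain ⟨δ', -, hδ'0, hδ'⟩ := ENNReal.lt_iff_exists_real_btwn.mp hδ
  exact ⟨δ', ENNReal.ofReal_pos.mp hδ'0, fun s hs ↦ hsmall (hs.trans hδ')⟩

lemma absContOn_of_norm_sub_le_integral (hh : IntegrableOn h S)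
    (hf : ∀ u v, u ≤ v → Icc u v ⊆ S → ‖f v - f u‖ ≤ ∫ t in u..v, h t) : AbsContOn f S := by
  intro ε hε
  obtain ⟨δ, hδ, hsmall⟩ := exists_pos_forall_setIntegral_lt hh hε
  refine ⟨δ, hδ, fun N u v huv hdisj hsum ↦ ?_⟩
  have hU : MeasurableSet (⋃ i, Ioo (u i) (v i)) := .iUnion fun _ ↦ measurableSet_Ioo
  have hUS : ⋃ i, Ioo (u i) (v i) ⊆ S :=
    iUnion_subset fun i ↦ Ioo_subset_Icc_self.trans (huv i).2
  have volume_lt : volume.restrict S (⋃ i, Ioo (u i) (v i)) < ENNReal.ofReal δ := by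
    calc volume.restrict S (⋃ i, Ioo (u i) (v i)) ≤ ∑ i, volume (Ioo (u i) (v i)) :=
          (Measure.restrict_apply_le _ _).trans (measure_iUnion_fintype_le _ _)
      _ = ENNReal.ofReal (∑ i, (v i - u i)) := by
          simp only [Real.volume_Ioo]
          exact (ENNReal.ofReal_sum_of_nonneg fun i _ ↦ sub_nonneg.mpr (huv i).1).symm
      _ < ENNReal.ofReal δ := (ENNReal.ofReal_lt_ofReal_iff hδ).mpr hsum
  calc ∑ i, ‖f (v i) - f (u i)‖ ≤ ∑ i, ∫ t in Ioo (u i) (v i), h t := by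
        refine Finset.sum_le_sum fun i _ ↦ (hf _ _ (huv i).1 (huv i).2).trans_eq ?_
        rw [intervalIntegral.integral_of_le (huv i).1, integral_Ioc_eq_integral_Ioo]
    _ = ∫ t in ⋃ i, Ioo (u i) (v i), h t :=
        (integral_iUnion_fintype (fun _ ↦ measurableSet_Ioo) (fun i j hij ↦ hdisj i j hij)
          fun i ↦ hh.mono_set (Ioo_subset_Icc_self.trans (huv i).2)).symm
    _ < ε := by simpa [Measure.restrict_restrict hU, inter_eq_left.mpr hUS] using hsmall _ volume_lt

end AbsolutelyContinuous

section Zeros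

lemma exists_first_last_eq {Y : Type*} [TopologicalSpace Y] [T1Space Y] {f : ℝ → Y} {u v : ℝ}
    {c : Y} (hf : ContinuousOn f (Icc u v)) (hc : ∃ z ∈ Icc u v, f z = c) :
    ∃ z ∈ Icc u v, ∃ w ∈ Icc z v, f z = c ∧ f w = c ∧
      (∀ t ∈ Ioo u z, f t ≠ c) ∧ ∀ t ∈ Ioo w v, f t ≠ c := by
  have compact : IsCompact (Icc u v ∩ f ⁻¹' {c}) := isCompact_Icc.of_isClosed_subset
    (hf.preimage_isClosed_of_isClosed isClosed_Icc isClosed_singleton) inter_subset_left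
  obtain ⟨z, ⟨hz, hfz⟩, z_le⟩ := compact.exists_isLeast hc
  obtain ⟨w, ⟨hw, hfw⟩, le_w⟩ := compact.exists_isGreatest hc
  exact ⟨z, hz, w, ⟨z_le ⟨hw, hfw⟩, hw.2⟩, hfz, hfw,
    fun t ht h ↦ (z_le ⟨⟨ht.1.le, ht.2.le.trans hz.2⟩, h⟩).not_gt ht.2,
    fun t ht h ↦ (le_w ⟨⟨hw.1.trans ht.1.le, ht.2.le⟩, h⟩).not_gt ht.1⟩

variable {E : Type*} [NormedAddCommGroup E] [NormedSpace ℝ E] {f : ℝ → E} {h : ℝ → ℝ} {u v : ℝ}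

lemma norm_sub_le_integral_of_norm_deriv_le_of_ne_zero (huv : u ≤ v) (hf : ContinuousOn f (Icc u v))
    (hh : IntervalIntegrable h volume u v) (h0 : ∀ t, 0 ≤ h t)
    (hfh : ∀ t ∈ Ioo u v, f t ≠ 0 → DifferentiableAt ℝ f t ∧ ‖deriv f t‖ ≤ h t) :
    ‖f v - f u‖ ≤ ∫ t in u..v, h t := by
  have of_ne_zero {x y : ℝ} (hxy : x ≤ y) (hsub : Icc x y ⊆ Icc u v)
      (hne : ∀ t ∈ Ioo x y, f t ≠ 0) : ‖f y - f x‖ ≤ ∫ t in x..y, h t := by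
    have hIoo : Ioo x y ⊆ Ioo u v := Ioo_subset_Ioo
      (hsub (left_mem_Icc.mpr hxy)).1 (hsub (right_mem_Icc.mpr hxy)).2
    refine norm_sub_le_integral_of_norm_deriv_le_of_le hxy (hf.mono hsub)
      (fun t ht ↦ (hfh t (hIoo ht) (hne t ht)).1.differentiableWithinAt)
      (.of_forall fun t ht ↦ (hfh t (hIoo ht) (hne t ht)).2) (hh.mono_set ?_)
    rwa [uIcc_of_le hxy, uIcc_of_le huv]
  by_cases! hz : ∀ t ∈ Icc u v, f t ≠ 0
  · exact of_ne_zero huv le_rfl fun t ht ↦ hz t (Ioo_subset_Icc_self ht)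
  obtain ⟨z, hz, w, hw, hfz, hfw, ne_left, ne_right⟩ := exists_first_last_eq hf hz
  have hsub {x y : ℝ} (hx : x ∈ Icc u v) (hy : y ∈ Icc u v) : IntervalIntegrable h volume x y :=
    hh.mono_set (uIcc_of_le huv ▸ uIcc_subset_Icc hx hy)
  have hu := left_mem_Icc.mpr huv
  have hv := right_mem_Icc.mpr huv
  have hw' : w ∈ Icc u v := ⟨hz.1.trans hw.1, hw.2⟩
  calc ‖f v - f u‖ = ‖(f z - f u) + (f v - f w)‖ := by rw [hfz, hfw]; congr 1; abel
    _ ≤ (∫ t in u..z, h t) + ∫ t in w..v, h t := (norm_add_le _ _).trans <| add_le_add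
        (of_ne_zero hz.1 (Icc_subset_Icc_right hz.2) ne_left)
        (of_ne_zero hw.2 (Icc_subset_Icc_left hw'.1) ne_right)
    _ ≤ (∫ t in u..z, h t) + (∫ t in z..w, h t) + ∫ t in w..v, h t := by
        gcongr
        exact le_add_of_nonneg_right (intervalIntegral.integral_nonneg hw.1 fun t _ ↦ h0 t)
    _ = ∫ t in u..v, h t := by
        rw [intervalIntegral.integral_add_adjacent_intervals (hsub hu hz) (hsub hz hw'),
          intervalIntegral.integral_add_adjacent_intervals (hsub hu hw') (hsub hw' hv)]

lemma ae_deriv_eq_zero_of_eq (f : ℝ → E) (c : E) : ∀ᵐ t, f t = c → deriv f t = 0 := by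
  have isolated : {t | f t = c ∧ deriv f t ≠ 0}.Countable := by
    refine (countable_setOfPred_isolated_right_within (s := {t | f t = c})).mono ?_
    rintro t ⟨ht, htd⟩
    have ne_near := (differentiableAt_of_deriv_ne_zero htd).hasDerivAt.eventually_ne (c := c) htd
    refine ⟨ht, Filter.empty_mem_iff_bot.mp ?_⟩
    filter_upwards [ne_near.filter_mono (nhdsWithin_mono t fun z hz ↦ (ne_of_gt hz.2)),
      self_mem_nhdsWithin] with z hz hmem using hz hmem.1
  filter_upwards [isolated.ae_notMem volume] with t ht hft
  by_contra htd
  exact ht ⟨hft, htd⟩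

lemma ae_norm_deriv_le_of_ne_zero {S : Set ℝ} (h0 : ∀ t, 0 ≤ h t)
    (hfh : ∀ t ∈ S, f t ≠ 0 → ‖deriv f t‖ ≤ h t) : ∀ᵐ t, t ∈ S → ‖deriv f t‖ ≤ h t := by
  filter_upwards [ae_deriv_eq_zero_of_eq f 0] with t ht htS
  by_cases hft : f t = 0
  · simpa [ht hft] using h0 t
  · exact hfh t htS hft

end Zeros

section RootDerivative

variable {f g g' : ℝ → ℝ} {m t : ℝ} {S : Set ℝ}

lemma abs_sign_coe_of_ne_zero {x : ℝ} (hx : x ≠ 0) : |(SignType.sign x : ℝ)| = 1 := by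
  rcases hx.lt_or_gt with h | h <;> simp [h]

lemma eventually_eq_sign_mul_rpow (hm : 0 < m) (hf : ContinuousAt f t) (hft : f t ≠ 0)
    (hfg : ∀ᶠ x in nhds t, |f x| ^ m = |g x|) :
    f =ᶠ[nhds t] fun x ↦ SignType.sign (f t) * |g x| ^ m⁻¹ := by
  have sign_eq : ∀ᶠ x in nhds t, SignType.sign (f x) = SignType.sign (f t) :=
    ((continuousAt_sign_of_ne_zero hft).comp hf).eventually_mem (s := {SignType.sign (f t)})
      (by simp [nhds_discrete])
  filter_upwards [sign_eq, hfg] with x hx hxg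
  rw [← hxg, Real.rpow_rpow_inv (abs_nonneg _) hm.ne', ← hx, sign_mul_abs]

lemma differentiableAt_and_abs_deriv_eq_rootSlope (hm : 0 < m) (hg : HasDerivAt g (g' t) t)
    (hf : ContinuousAt f t) (hft : f t ≠ 0) (hfg : ∀ᶠ x in nhds t, |f x| ^ m = |g x|) :
    DifferentiableAt ℝ f t ∧ |deriv f t| = rootSlope m g g' t := by
  have hgt : g t ≠ 0 := by
    rw [← abs_pos, ← hfg.self_of_nhds]
    exact Real.rpow_pos_of_pos (abs_pos.mpr hft) m
  have deriv_root : HasDerivAt (fun x ↦ |g x| ^ m⁻¹)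
      (SignType.sign (g t) * g' t * m⁻¹ * |g t| ^ (m⁻¹ - 1)) t :=
    ((hasDerivAt_abs hgt).comp t hg).rpow_const (Or.inl (abs_ne_zero.mpr hgt))
  have deriv_f := (deriv_root.const_mul (SignType.sign (f t) : ℝ)).congr_of_eventuallyEq
    (eventually_eq_sign_mul_rpow hm hf hft hfg)
  refine ⟨deriv_f.differentiableAt, ?_⟩
  rw [deriv_f.deriv, rootSlope]
  simp only [abs_mul, abs_sign_coe_of_ne_zero hft, abs_sign_coe_of_ne_zero hgt,
    abs_of_pos (inv_pos.mpr hm), Real.abs_rpow_of_nonneg (abs_nonneg (g t)), abs_abs]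
  ring

lemma rootSlope_nonneg (hm : 0 ≤ m) (t : ℝ) : 0 ≤ rootSlope m g g' t := by
  unfold rootSlope
  positivity

lemma aestronglyMeasurable_rootSlope (m : ℝ) (hS : IsOpen S)
    (hg : ∀ t ∈ S, HasDerivAt g (g' t) t) :
    AEStronglyMeasurable (rootSlope m g g') (volume.restrict S) := by
  have g_meas : AEMeasurable g (volume.restrict S) :=
    ContinuousOn.aemeasurable (fun t ht ↦ (hg t ht).continuousAt.continuousWithinAt)
      hS.measurableSet
  have g'_meas : AEMeasurable g' (volume.restrict S) :=
    (measurable_deriv g).aemeasurable.congr <|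
      (ae_restrict_mem hS.measurableSet).mono fun t ht ↦ (hg t ht).deriv
  exact ((g'_meas.abs.mul (g_meas.abs.pow_const _)).div_const m).aestronglyMeasurable

lemma absContOn_of_rpow_abs_eq_abs (hm : 0 < m) (hS : IsOpen S)
    (hg : ∀ t ∈ S, HasDerivAt g (g' t) t) (hf : ContinuousOn f S)
    (hfg : ∀ t ∈ S, |f t| ^ m = |g t|) (hint : IntegrableOn (rootSlope m g g') S) :
    AbsContOn f S := by
  refine absContOn_of_norm_sub_le_integral hint fun u v huv hsub ↦ ?_
  refine norm_sub_le_integral_of_norm_deriv_le_of_ne_zero huv (hf.mono hsub) ?_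
    (rootSlope_nonneg hm.le) fun t ht hft ↦ ?_
  · rw [intervalIntegrable_iff_integrableOn_Icc_of_le huv]
    exact hint.mono_set hsub
  · have htS : t ∈ S := hsub (Ioo_subset_Icc_self ht)
    have hSt := hS.mem_nhds htS
    exact (differentiableAt_and_abs_deriv_eq_rootSlope hm (hg t htS) (hf.continuousAt hSt) hft
      (Filter.mem_of_superset hSt hfg)).imp_right (·.le)

lemma volume_real_abs_deriv_gt_le (hm : 0 < m) (hS : IsOpen S) (hSfin : volume S ≠ ⊤)
    (hg : ∀ t ∈ S, HasDerivAt g (g' t) t) (hf : ContinuousOn f S)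
    (hfg : ∀ t ∈ S, |f t| ^ m = |g t|) (r : ℝ) :
    volume.real {t ∈ S | r < |deriv f t|} ≤ volume.real {t ∈ S | r < rootSlope m g g' t} := by
  have deriv_le : ∀ᵐ t, t ∈ S → |deriv f t| ≤ rootSlope m g g' t :=
    ae_norm_deriv_le_of_ne_zero (rootSlope_nonneg hm.le) fun t ht hft ↦
      have hSt := hS.mem_nhds ht
      (differentiableAt_and_abs_deriv_eq_rootSlope hm (hg t ht) (hf.continuousAt hSt) hft
        (Filter.mem_of_superset hSt hfg)).2.le
  refine ENNReal.toReal_mono (ne_top_of_le_ne_top hSfin (measure_mono (sep_subset _ _)))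
    (measure_mono_ae ?_)
  filter_upwards [deriv_le] with t ht htr using ⟨htr.1, htr.2.trans_le (ht htr.1)⟩

end RootDerivative

section Conclusion

variable {d : ℕ → ℝ → ℝ} {j k : ℕ} {a b α s H G p : ℝ}

namespace HolderChain

lemma integrableOn_rootSlope (h : HolderChain d (j + 1) α H (Ioo a b)) (hα : 0 < α)
    (hab : a ≤ b) (hH : 0 ≤ H) (hG0 : 0 ≤ G) (hG : ∀ t ∈ Ioo a b, |d 1 t| ≤ G) (hs : s = j + α) :
    IntegrableOn (rootSlope (s + 1) (d 0) (d 1)) (Ioo a b) := by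
  have hs0 : 0 < s := by rw [hs]; positivity
  refine integrable_of_forall_mul_measureReal_rpow_le (q := s / (s + 1))
    (W := weakConst j * max (H ^ (s + 1)⁻¹ * (b - a) ^ (s / (s + 1))) (G ^ (s + 1)⁻¹))
    (by positivity) ((div_lt_one (by positivity)).mpr (lt_add_one s))
    (rootSlope_nonneg (by positivity))
    (aestronglyMeasurable_rootSlope _ isOpen_Ioo fun t ↦
      h.derivChain.hasDerivAt isOpen_Ioo j.succ_pos) fun r hr ↦ ?_
  rw [measureReal_restrict_apply' measurableSet_Ioo, inter_comm]
  exact h.mul_volume_rootSlope_gt_rpow_le hα hab hH hG0 hG hs hr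

lemma abs_deriv_le_sSup (h : HolderChain d (j + 1) α H (Ioo a b)) (hα : 0 ≤ α) :
    ∀ t ∈ Ioo a b, |d 1 t| ≤ sSup ((fun x ↦ |d 1 x|) '' Ioo a b) := by
  obtain ⟨B, hB⟩ := h.exists_norm_le hα (convex_Ioo a b) (Metric.isBounded_Ioo a b)
    (Nat.succ_le_succ j.zero_le)
  exact fun t ht ↦ le_csSup ⟨B, forall_mem_image.mpr hB⟩ (mem_image_of_mem _ ht)

end HolderChain

theorem ghisi_gobbino_general (hk : 1 ≤ k) (hα : 0 < α) (hab : a ≤ b)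
    (hp : 1 / p + 1 / (k + α) = 1) (h : HolderChain d k α H (Ioo a b)) {f : ℝ → ℝ}
    (hf : ContinuousOn f (Ioo a b)) (hfg : ∀ t ∈ Ioo a b, |f t| ^ (k + α) = |d 0 t|) :
    AbsContOn f (Ioo a b) ∧ ∀ r : ℝ, 0 ≤ r →
      r * volume.real {t ∈ Ioo a b | r < |deriv f t|} ^ (1 / p) ≤
        weakConst (k - 1) *
          max (HolderConst α (Ioo a b) (d k) ^ (k + α)⁻¹ * (b - a) ^ (1 / p))
            (sSup ((fun x ↦ |d 1 x|) '' Ioo a b) ^ (k + α)⁻¹) := by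
  obtain ⟨j, rfl⟩ := Nat.exists_eq_add_of_le' hk
  obtain ⟨s, hs⟩ : ∃ s, s = j + α := ⟨_, rfl⟩
  have hs0 : 0 < s := by rw [hs]; positivity
  have exponent : ((j + 1 : ℕ) : ℝ) + α = s + 1 := by rw [hs]; push_cast; ring
  rw [exponent] at hp hfg ⊢
  have conjugate : 1 / p = s / (s + 1) := by
    rw [eq_sub_of_add_eq hp]
    field_simp
    ring
  rw [conjugate]
  have hH := holderConst_nonneg (α := α) (S := Ioo a b) (g := d (j + 1))
  replace h : HolderChain d (j + 1) α (HolderConst α (Ioo a b) (d (j + 1))) (Ioo a b) :=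
    ⟨h.derivChain, fun x hx y hy ↦ norm_sub_le_holderConst_mul h.norm_sub_le hx hy⟩
  have hd (t) (ht : t ∈ Ioo a b) : HasDerivAt (d 0) (d 1 t) t :=
    h.derivChain.hasDerivAt isOpen_Ioo j.succ_pos ht
  have hG := h.abs_deriv_le_sSup hα.le
  have hG0 : 0 ≤ sSup ((fun x ↦ |d 1 x|) '' Ioo a b) :=
    Real.sSup_nonneg (forall_mem_image.mpr fun _ _ ↦ abs_nonneg _)
  refine ⟨absContOn_of_rpow_abs_eq_abs (by positivity) isOpen_Ioo hd hf hfg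
    (h.integrableOn_rootSlope hα hab hH hG0 hG hs), fun r hr ↦ ?_⟩
  refine le_trans ?_ (h.mul_volume_rootSlope_gt_rpow_le hα hab hH hG0 hG hs hr)
  gcongr r * ?_ ^ _
  exact volume_real_abs_deriv_gt_le (by positivity) isOpen_Ioo measure_Ioo_lt_top.ne hd hf hfg r

end Conclusion

/-- **Ghisi–Gobbino.** If `f` is continuous on a bounded open interval `I`
and `|f|^{k+α} = |g|` for some `g ∈ C^{k,α}(Ī)`, then `f` is absolutely continuous and its
a.e. derivative lies in weak-`L^p`, `1/p + 1/(k+α) = 1`, with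
`‖f'‖_{p,w,I} ≤ C(k) max{Höld_{α,I}(g^{(k)})^{1/(k+α)} |I|^{1/p}, ‖g'‖_∞^{1/(k+α)}}`. -/
theorem ghisi_gobbino (k : ℕ) (hk : 1 ≤ k) :
    ∃ C : ℝ, 0 < C ∧
      ∀ (αe : ℝ), 0 < αe → αe ≤ 1 →
      ∀ (a b : ℝ), a < b →
      ∀ (p : ℝ), 1 / p + 1 / ((k : ℝ) + αe) = 1 →
      ∀ d : ℕ → ℝ → ℝ,
      DerivChain d k (Icc a b) →
      ContinuousOn (d k) (Icc a b) →
      (∃ H : ℝ, ∀ x ∈ Ioo a b, ∀ y ∈ Ioo a b, |d k x - d k y| ≤ H * |x - y| ^ αe) →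
      ∀ f : ℝ → ℝ, ContinuousOn f (Ioo a b) →
      (∀ t ∈ Ioo a b, |f t| ^ ((k : ℝ) + αe) = |d 0 t|) →
      AbsContOn f (Ioo a b) ∧
      ∀ r : ℝ, 0 ≤ r →
        r * (volume {t | t ∈ Ioo a b ∧ r < |deriv f t|}).toReal ^ (1 / p) ≤
          C * max ((HolderConst αe (Ioo a b) (d k)) ^ (((k : ℝ) + αe)⁻¹) * (b - a) ^ (1 / p))
                  ((sSup ((fun x => |d 1 x|) '' Ioo a b)) ^ (((k : ℝ) + αe)⁻¹)) := by
  refine ⟨weakConst (k - 1), one_pos.trans_le (one_le_weakConst _), ?_⟩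
  intro α hα _ a b hab p hp d hd _ ⟨H, hH⟩ f hf hfg
  exact ghisi_gobbino_general hk hα hab.le hp ⟨hd.mono Ioo_subset_Icc_self, hH⟩ hf hfg
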